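/- For every λ-term M the following are equivalent: (i) there exists a ∈ T_r(M) with NF(a) ≠ 0; (ii) there exist a ∈ T_r(M) and m ∈ ℕ such that H_r^m(a) is a head-normal form different from 0; (iii) there exists m ∈ ℕ such that H^m(M) is a head-normal form; (iv) M is head-normalizable. -/

import Mathlib

/-! Ordinary λ-terms, in de Bruijn notation. -/
inductive Lam : Type
  | var : ℕ → Lam
  | lam : Lam → Lam
  | app : Lam → Lam → Lam
  deriving DecidableEq

namespace Lam

/-- Shift the free indices `≥ d` up by one. -/
def lift (d : ℕ) : Lam → Lam
  | var n => if n < d then var n else var (n + 1)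
  | lam M => lam (lift (d + 1) M)
  | app P Q => app (lift d P) (lift d Q)

/-- Capture-avoiding substitution of `N` for the free variable `k`. -/
def subst : Lam → ℕ → Lam → Lam
  | var n, k, N => if n = k then N else if k < n then var (n - 1) else var n
  | lam M, k, N => lam (subst M (k + 1) (lift 0 N))
  | app P Q, k, N => app (subst P k N) (subst Q k N)

/-- Number of free occurrences of the variable `k`. -/
def count (k : ℕ) : Lam → ℕ
  | var n => if n = k then 1 else 0
  | lam M => count (k + 1) M
  | app P Q => count k P + count k Q

/-- One-step β-reduction. -/
inductive Beta : Lam → Lam → Prop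
  | beta (M N : Lam) : Beta (app (lam M) N) (subst M 0 N)
  | lam {M M'} : Beta M M' → Beta (lam M) (lam M')
  | appL {P P' Q} : Beta P P' → Beta (app P Q) (app P' Q)
  | appR {P Q Q'} : Beta Q Q' → Beta (app P Q) (app P Q')

/-- The head of the application spine is a variable, with no λ on the spine. -/
def neutral : Lam → Bool
  | var _ => true
  | lam _ => false
  | app P _ => neutral P

/-- Head-normal forms: `λx₁…λxₘ. x N₁ … Nₙ`. -/
def isHNF : Lam → Prop
  | var _ => True
  | lam M => isHNF M
  | app P _ => neutral P = true

/-- The head-reduction function `H`: contracts the head redex, identity on head-normal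
forms. -/
def H : Lam → Lam
  | var n => var n
  | lam M => lam (H M)
  | app (lam P) Q => subst P 0 Q
  | app (var n) Q => app (var n) Q
  | app (app P₁ P₂) Q => app (H (app P₁ P₂)) Q

/-- The left-parallel reduction function `L`: identity on β-normal forms, propagated to
the arguments on head-normal forms, contraction of the head redex otherwise. -/
def L : Lam → Lam
  | var n => var n
  | lam M => lam (L M)
  | app (lam P) Q => subst P 0 Q
  | app (var n) Q => app (var n) (L Q)
  | app (app P₁ P₂) Q =>
      if neutral (app P₁ P₂) then app (L (app P₁ P₂)) (L Q)
      else app (L (app P₁ P₂)) Q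

/-- Iterated application `M N₁ … Nₙ`. -/
def mkApps (M : Lam) (Ns : List Lam) : Lam := Ns.foldl app M

/-- All free variables are `< d`. -/
def ClosedAt (d : ℕ) : Lam → Prop
  | var n => n < d
  | lam M => ClosedAt (d + 1) M
  | app P Q => ClosedAt d P ∧ ClosedAt d Q

/-- `M` is head-normalizable: it β-reduces in finitely many steps to a head-normal form. -/
def HeadNormalizable (M : Lam) : Prop :=
  ∃ N, Relation.ReflTransGen Beta M N ∧ isHNF N

/-- `M` is a β-normal form: it contains no β-redex, i.e. admits no β-step. -/
def BetaNF (M : Lam) : Prop := ¬∃ N, Beta M N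

/-- `M` is β-normalizable: it β-reduces in finitely many steps to a β-normal form. -/
def BetaNormalizable (M : Lam) : Prop :=
  ∃ N, Relation.ReflTransGen Beta M N ∧ BetaNF N

/-- `M` is strongly β-normalizable: no infinite β-reduction sequence starts from `M`. -/
def StronglyNormalizable (M : Lam) : Prop := Acc (fun N M' => Beta M' N) M

end Lam

/-! Rigid resource terms (the nonzero ones), in de Bruijn notation:
`a ::= x | λx.a | ⟨c⟩d⃗` with `d⃗` a list of rigid terms.
The term `0` is represented by `none : Option Rig`. -/
inductive Rig : Type
  | var : ℕ → Rig
  | lam : Rig → Rig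
  | app : Rig → List Rig → Rig

namespace Rig

mutual
/-- Number of free occurrences of the variable `k` in a rigid term. -/
def countR (k : ℕ) : Rig → ℕ
  | var n => if n = k then 1 else 0
  | lam a => countR (k + 1) a
  | app c ds => countR k c + countRList k ds
termination_by a => sizeOf a

def countRList (k : ℕ) : List Rig → ℕ
  | [] => 0
  | d :: ds => countR k d + countRList k ds
termination_by ds => sizeOf ds
end

mutual
/-- Shift the free indices `≥ d` up by one. -/
def liftR (d : ℕ) : Rig → Rig
  | var n => if n < d then var n else var (n + 1)
  | lam a => lam (liftR (d + 1) a)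
  | app c ds => app (liftR d c) (liftRList d ds)
termination_by a => sizeOf a

def liftRList (d : ℕ) : List Rig → List Rig
  | [] => []
  | a :: as => liftR d a :: liftRList d as
termination_by as => sizeOf as
end

mutual
/-- Rigid substitution `a[b⃗/k]`: the list `b⃗` is distributed, in order, over the
free occurrences of the variable `k`; the result is `none` (i.e. `0`) when
`|b⃗| ≠ n_k(a)`. -/
def rsubst (k : ℕ) : Rig → List Rig → Option Rig
  | var n, bs =>
      if n = k then (match bs with | [b] => some b | _ => none)
      else (match bs with
            | [] => some (if k < n then var (n - 1) else var n)
            | _ => none)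
  | lam a, bs => (rsubst (k + 1) a (liftRList 0 bs)).map lam
  | app c ds, bs =>
      match rsubst k c (bs.take (countR k c)), rsubstList k ds (bs.drop (countR k c)) with
      | some c', some ds' => some (app c' ds')
      | _, _ => none
termination_by a _ => sizeOf a

def rsubstList (k : ℕ) : List Rig → List Rig → Option (List Rig)
  | [], bs => if bs.isEmpty then some [] else none
  | d :: ds, bs =>
      match rsubst k d (bs.take (countR k d)), rsubstList k ds (bs.drop (countR k d)) with
      | some d', some ds' => some (d' :: ds')
      | _, _ => none
termination_by ds _ => sizeOf ds
end

/-- One-step rigid resource reduction `→_r` (contextual closure of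
`⟨λx.a⟩b⃗ →_r a[b⃗/x]`); the result may be `0` (i.e. `none`), which annihilates
the surrounding context. -/
inductive RStep : Rig → Option Rig → Prop
  | beta (a : Rig) (bs : List Rig) : RStep (app (lam a) bs) (rsubst 0 a bs)
  | lam {a r} : RStep a r → RStep (lam a) (r.map lam)
  | head {c r} (ds : List Rig) : RStep c r → RStep (app c ds) (r.map (fun c' => app c' ds))
  | arg {d r} (c : Rig) (ds₁ ds₂ : List Rig) :
      RStep d r → RStep (app c (ds₁ ++ d :: ds₂)) (r.map (fun d' => app c (ds₁ ++ d' :: ds₂)))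

/-- `→_r` on rigid terms extended with `0`; `0` is inert. -/
inductive RStepO : Option Rig → Option Rig → Prop
  | mk {a r} : RStep a r → RStepO (some a) r

/-- `r` is a `→_r`-normal form (`0` is one). -/
def RNormal (r : Option Rig) : Prop := ¬∃ r', RStepO r r'

/-- The head of the application spine is a variable, with no λ on the spine. -/
def rNeutral : Rig → Bool
  | var _ => true
  | lam _ => false
  | app c _ => rNeutral c

/-- Rigid head-normal forms among nonzero terms: `λx₁…λxₘ.⟨…⟨x⟩d⃗₁…⟩d⃗ₙ`
(the term `0` is a head-normal form, but it is treated separately). -/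
def rIsHNF : Rig → Prop
  | var _ => True
  | lam a => rIsHNF a
  | app c _ => rNeutral c = true

/-- The rigid head-reduction function `H_r`: contracts the head redex, identity on
head-normal forms; the result may be `0` (i.e. `none`). -/
def Hr : Rig → Option Rig
  | var n => some (var n)
  | lam a => (Hr a).map lam
  | app (lam a) bs => rsubst 0 a bs
  | app (var n) ds => some (app (var n) ds)
  | app (app c₁ c₂) ds => (Hr (app c₁ c₂)).map (fun c' => app c' ds)

/-- `H_r` extended to terms-or-`0`. -/
def HrO : Option Rig → Option Rig := fun r => r.bind Hr

mutual
/-- The rigid left-parallel reduction function `L_r`: identity on `→_r`-normal forms,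
applied componentwise to the argument lists on head-normal forms, contraction of the
head redex otherwise; the result may be `0` (i.e. `none`). -/
def Lr : Rig → Option Rig
  | var n => some (var n)
  | lam a => (Lr a).map lam
  | app (lam a) bs => rsubst 0 a bs
  | app (var n) ds => (LrList ds).map (fun ds' => app (var n) ds')
  | app (app c₁ c₂) ds =>
      if rNeutral (app c₁ c₂) then
        match Lr (app c₁ c₂), LrList ds with
        | some c', some ds' => some (app c' ds')
        | _, _ => none
      else (Lr (app c₁ c₂)).map (fun c' => app c' ds)
termination_by a => sizeOf a

def LrList : List Rig → Option (List Rig)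
  | [] => some []
  | d :: ds =>
      match Lr d, LrList ds with
      | some d', some ds' => some (d' :: ds')
      | _, _ => none
termination_by ds => sizeOf ds
end

/-- `L_r` extended to terms-or-`0`. -/
def LrO : Option Rig → Option Rig := fun r => r.bind Lr

/-- Positive resource terms: no empty list/multiset occurs as the argument of an
application. -/
inductive rPositive : Rig → Prop
  | var (n : ℕ) : rPositive (var n)
  | lam {a} : rPositive a → rPositive (lam a)
  | app {c : Rig} {ds : List Rig} :
      rPositive c → ds ≠ [] → (∀ d ∈ ds, rPositive d) → rPositive (app c ds)

end Rig

/-- The rigid expansion `T_r(M)` of a λ-term (equivalently, the support of its Taylor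
expansion, with multisets presented by lists: `Texp M` is closed under permutation of
argument lists). -/
def Texp : Lam → Set Rig
  | Lam.var n => {Rig.var n}
  | Lam.lam M => {a | ∃ b ∈ Texp M, a = Rig.lam b}
  | Lam.app P Q => {a | ∃ c ∈ Texp P, ∃ ds : List Rig, (∀ d ∈ ds, d ∈ Texp Q) ∧ a = Rig.app c ds}

namespace Rig

/-- The support of the `n`-linear substitution `∂_k a · b̄`, where the multiset `b̄` is
presented by the list `bs`: the finite formal sum (multiset) of all nonzero results of
rigid substitutions along bijective assignments, i.e. permutations of `bs`. -/
def permSubst (k : ℕ) (a : Rig) (bs : List Rig) : Multiset Rig :=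
  ↑(bs.permutations.filterMap (fun bs' => rsubst k a bs'))

/-- One step of non-erasing ε-resource reduction `→^{¬e}_{∂ε}` out of a single resource
term, producing a finite formal sum (a multiset) of resource terms: non-erasing resource
β-steps `⟨λx.a⟩b̄ → ∂_x a · b̄` (with `x ∈ FV(a)`) and resource σ₁-steps, under any
context. -/
inductive NEStep : Rig → Multiset Rig → Prop
  | beta {a : Rig} (bs : List Rig) :
      0 < countR 0 a → NEStep (app (lam a) bs) (permSubst 0 a bs)
  | sigma (a : Rig) (ts qs : List Rig) :
      NEStep (app (app (lam a) ts) qs) {app (lam (app a (liftRList 0 qs))) ts}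
  | lam {a σ} : NEStep a σ → NEStep (lam a) (σ.map lam)
  | head {c σ} (ds : List Rig) : NEStep c σ → NEStep (app c ds) (σ.map (fun c' => app c' ds))
  | arg {d σ} (c : Rig) (ds₁ ds₂ : List Rig) :
      NEStep d σ → NEStep (app c (ds₁ ++ d :: ds₂)) (σ.map (fun d' => app c (ds₁ ++ d' :: ds₂)))

/-- Non-erasing ε-resource reduction on finite formal sums, extended by linearity. -/
def NEStepSum (σ τ : Multiset Rig) : Prop :=
  ∃ (a : Rig) (ρ υ : Multiset Rig), σ = a ::ₘ ρ ∧ NEStep a υ ∧ τ = υ + ρ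

/-- `σ` is a `→^{¬e}_{∂ε}`-normal form. -/
def NENormal (σ : Multiset Rig) : Prop := ¬∃ τ, NEStepSum σ τ

end Rig

/-- One step of non-erasing ε-reduction on λ-terms: non-erasing β-steps
`(λx.M)N → M[N/x]` (with `x ∈ FV(M)`) together with σ₁-steps
`((λx.M)N)P → (λx.MP)N` (`x ∉ FV(P)`), under any context. -/
inductive NEeps : Lam → Lam → Prop
  | beta {M : Lam} (N : Lam) :
      0 < Lam.count 0 M → NEeps (Lam.app (Lam.lam M) N) (Lam.subst M 0 N)
  | sigma (M N P : Lam) :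
      NEeps (Lam.app (Lam.app (Lam.lam M) N) P)
        (Lam.app (Lam.lam (Lam.app M (Lam.lift 0 P))) N)
  | lam {M M'} : NEeps M M' → NEeps (Lam.lam M) (Lam.lam M')
  | appL {P P' Q} : NEeps P P' → NEeps (Lam.app P Q) (Lam.app P' Q)
  | appR {P Q Q'} : NEeps Q Q' → NEeps (Lam.app P Q) (Lam.app P Q')

/-- The set `S` of λ-terms. -/
inductive SLam : Lam → Prop
  | varApp (n : ℕ) (Ms : List Lam) :
      (∀ M ∈ Ms, SLam M) → SLam (Lam.mkApps (Lam.var n) Ms)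
  | lam {M} : SLam M → SLam (Lam.lam M)
  | redex (M₀ M₁ : Lam) (Ms : List Lam) :
      SLam M₁ → SLam (Lam.mkApps (Lam.subst M₀ 0 M₁) Ms) →
      SLam (Lam.mkApps (Lam.app (Lam.lam M₀) M₁) Ms)

/-- λI-terms: every abstraction binds a variable occurring free in its body. -/
def LamI : Lam → Prop
  | Lam.var _ => True
  | Lam.lam M => LamI M ∧ 0 < Lam.count 0 M
  | Lam.app P Q => LamI P ∧ LamI Q

namespace HN

/-! ### Intersection types (graph model) -/

inductive Ty : Type
  | o : Ty
  | arr : List Ty → Ty → Ty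

def cons {α : Type} (S : α) (ρ : ℕ → α) : ℕ → α
  | 0 => S
  | n + 1 => ρ n

abbrev Env := ℕ → Set Ty

/-- Typing of λ-terms. -/
inductive LT : Env → Lam → Ty → Prop
  | var {ρ : Env} {n t} : t ∈ ρ n → LT ρ (.var n) t
  | lam {ρ : Env} {M e d} : LT (cons {x | x ∈ e} ρ) M d → LT ρ (.lam M) (.arr e d)
  | app {ρ : Env} {P Q e d} : LT ρ P (.arr e d) → (∀ x ∈ e, LT ρ Q x) → LT ρ (.app P Q) d

/-- Typing of rigid terms. -/
inductive RT : Env → Rig → Ty → Prop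
  | var {ρ : Env} {n t} : t ∈ ρ n → RT ρ (.var n) t
  | lam {ρ : Env} {M e d} : RT (cons {x | x ∈ e} ρ) M d → RT ρ (.lam M) (.arr e d)
  | app {ρ : Env} {c : Rig} {bs : List Rig} {e d} (f : Ty → Rig) :
      RT ρ c (.arr e d) → (∀ x ∈ e, f x ∈ bs) → (∀ x ∈ e, RT ρ (f x) x) → RT ρ (.app c bs) d

theorem RT.app' {ρ : Env} {c : Rig} {bs : List Rig} {e d} (h : RT ρ c (.arr e d))
    (h2 : ∀ x ∈ e, ∃ b ∈ bs, RT ρ b x) : RT ρ (.app c bs) d := by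
  classical
  have : Nonempty Rig := ⟨.var 0⟩
  choose! f hf using h2
  exact RT.app f h (fun x hx => (hf x hx).1) (fun x hx => (hf x hx).2)

theorem RT_app_iff {ρ : Env} {c : Rig} {bs : List Rig} {d} :
    RT ρ (.app c bs) d ↔ ∃ e, RT ρ c (.arr e d) ∧ ∀ x ∈ e, ∃ b ∈ bs, RT ρ b x := by
  constructor
  · intro h
    cases h with
    | app f h1 h2 h3 => exact ⟨_, h1, fun x hx => ⟨f x, h2 x hx, h3 x hx⟩⟩
  · rintro ⟨e, h1, h2⟩
    exact h1.app' h2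

theorem cons_mono {S T : Set Ty} {ρ ρ' : Env} (h : S ⊆ T) (h' : ∀ n, ρ n ⊆ ρ' n) :
    ∀ n, cons S ρ n ⊆ cons T ρ' n
  | 0 => h
  | n + 1 => h' n

theorem LT.mono {ρ ρ' : Env} {M d} (h : LT ρ M d) (hρ : ∀ n, ρ n ⊆ ρ' n) : LT ρ' M d := by
  induction h generalizing ρ' with
  | var h => exact .var (hρ _ h)
  | lam _ ih => exact .lam (ih (cons_mono subset_rfl hρ))
  | app _ _ ih1 ih2 => exact .app (ih1 hρ) (fun x hx => ih2 x hx hρ)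

theorem RT.mono {ρ ρ' : Env} {M d} (h : RT ρ M d) (hρ : ∀ n, ρ n ⊆ ρ' n) : RT ρ' M d := by
  induction h generalizing ρ' with
  | var h => exact .var (hρ _ h)
  | lam _ ih => exact .lam (ih (cons_mono subset_rfl hρ))
  | app f _ h _ ih1 ih2 => exact .app f (ih1 hρ) h (fun x hx => ih2 x hx hρ)

def toEnv (θ : ℕ → List Ty) : Env := fun n => {x | x ∈ θ n}

theorem cont_list {ρ : Env} {P : Ty → Env → Prop}
    (hm : ∀ x ρ ρ', P x ρ → (∀ n, ρ n ⊆ ρ' n) → P x ρ') (e : List Ty)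
    (h : ∀ x ∈ e, ∃ θ : ℕ → List Ty, (∀ n, toEnv θ n ⊆ ρ n) ∧ P x (toEnv θ)) :
    ∃ θ : ℕ → List Ty, (∀ n, toEnv θ n ⊆ ρ n) ∧ ∀ x ∈ e, P x (toEnv θ) := by
  induction e with
  | nil => exact ⟨fun _ => [], by simp [toEnv], by simp⟩
  | cons a e ih =>
    obtain ⟨θ, h1, h2⟩ := ih (fun x hx => h x (by simp [hx]))
    obtain ⟨η, h3, h4⟩ := h a (by simp)
    refine ⟨fun n => η n ++ θ n, ?_, ?_⟩
    · intro n x hx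
      rcases List.mem_append.1 hx with hx | hx
      · exact h3 n hx
      · exact h1 n hx
    · intro x hx
      rcases List.mem_cons.1 hx with rfl | hx
      · exact hm _ _ _ h4 (fun n y hy => List.mem_append_left _ hy)
      · exact hm _ _ _ (h2 x hx) (fun n y hy => List.mem_append_right _ hy)

theorem tail_env {e : List Ty} {ρ : Env} {θ : ℕ → List Ty}
    (h : ∀ n, toEnv θ n ⊆ cons {x | x ∈ e} ρ n) :
    (∀ n, toEnv (fun n => θ (n + 1)) n ⊆ ρ n) ∧
    ∀ n, toEnv θ n ⊆ cons {x | x ∈ e} (toEnv (fun n => θ (n + 1))) n := by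
  refine ⟨fun n => h (n + 1), fun n => ?_⟩
  cases n with
  | zero => exact h 0
  | succ n => exact subset_rfl

theorem LT.cont {ρ : Env} {M d} (h : LT ρ M d) :
    ∃ θ : ℕ → List Ty, (∀ n, toEnv θ n ⊆ ρ n) ∧ LT (toEnv θ) M d := by
  induction h with
  | @var ρ n t h =>
    refine ⟨fun m => if m = n then [t] else [], fun m x hx => ?_, .var (by simp [toEnv])⟩
    simp only [toEnv, Set.mem_ofPred_eq] at hx
    split_ifs at hx with hm
    · subst hm; simp at hx; subst hx; exact h
    · simp at hx
  | lam _ ih =>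
    obtain ⟨θ, h1, h2⟩ := ih
    exact ⟨_, (tail_env h1).1, .lam (h2.mono (tail_env h1).2)⟩
  | @app ρ P Q e d _ _ ih1 ih2 =>
    obtain ⟨θ, h1, h2⟩ := cont_list (P := fun x ρ => LT ρ Q x) (fun x ρ ρ' h h' => h.mono h') e ih2
    obtain ⟨η, h3, h4⟩ := ih1
    refine ⟨fun n => θ n ++ η n, ?_, .app (h4.mono ?_) (fun x hx => (h2 x hx).mono ?_)⟩
    · intro n x hx
      rcases List.mem_append.1 hx with hx | hx
      · exact h1 n hx
      · exact h3 n hx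
    · exact (fun n y hy => List.mem_append_right _ hy)
    · exact (fun n y hy => List.mem_append_left _ hy)

theorem RT.cont {ρ : Env} {M d} (h : RT ρ M d) :
    ∃ θ : ℕ → List Ty, (∀ n, toEnv θ n ⊆ ρ n) ∧ RT (toEnv θ) M d := by
  induction h with
  | @var ρ n t h =>
    refine ⟨fun m => if m = n then [t] else [], fun m x hx => ?_, .var (by simp [toEnv])⟩
    simp only [toEnv, Set.mem_ofPred_eq] at hx
    split_ifs at hx with hm
    · subst hm; simp at hx; subst hx; exact h
    · simp at hx
  | lam _ ih =>
    obtain ⟨θ, h1, h2⟩ := ih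
    exact ⟨_, (tail_env h1).1, .lam (h2.mono (tail_env h1).2)⟩
  | @app ρ P Q e d f _ hf _ ih1 ih2 =>
    obtain ⟨θ, h1, h2⟩ := cont_list (P := fun x ρ => RT ρ (f x) x)
      (fun x ρ ρ' h h' => h.mono h') e ih2
    obtain ⟨η, h3, h4⟩ := ih1
    refine ⟨fun n => θ n ++ η n, ?_, .app f (h4.mono ?_) hf (fun x hx => (h2 x hx).mono ?_)⟩
    · intro n x hx
      rcases List.mem_append.1 hx with hx | hx
      · exact h1 n hx
      · exact h3 n hx
    · exact (fun n y hy => List.mem_append_right _ hy)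
    · exact (fun n y hy => List.mem_append_left _ hy)

/-! ### Parallel substitution -/

open Lam

def upr (f : ℕ → ℕ) : ℕ → ℕ
  | 0 => 0
  | n + 1 => f n + 1

def ren (f : ℕ → ℕ) : Lam → Lam
  | .var n => .var (f n)
  | .lam M => .lam (ren (upr f) M)
  | .app P Q => .app (ren f P) (ren f Q)

def ups (σ : ℕ → Lam) : ℕ → Lam := cons (.var 0) (fun n => ren Nat.succ (σ n))

def ps (σ : ℕ → Lam) : Lam → Lam
  | .var n => σ n
  | .lam M => .lam (ps (ups σ) M)
  | .app P Q => .app (ps σ P) (ps σ Q)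

theorem lift_eq (d : ℕ) (M : Lam) : lift d M = ren (fun n => if n < d then n else n + 1) M := by
  induction M generalizing d with
  | var n => simp only [lift, ren]; split_ifs <;> rfl
  | lam M ih =>
    simp only [lift, ren, ih]
    congr 2
    funext n
    cases n with
    | zero => simp [upr]
    | succ n => simp only [upr]; split_ifs <;> omega
  | app P Q h1 h2 => simp [lift, ren, h1, h2]

theorem lift_zero (M : Lam) : lift 0 M = ren Nat.succ M := by
  rw [lift_eq]; rfl

def sgl (k : ℕ) (N : Lam) : ℕ → Lam :=
  fun n => if n = k then N else if k < n then .var (n - 1) else .var n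

theorem subst_eq (M : Lam) (k : ℕ) (N : Lam) : subst M k N = ps (sgl k N) M := by
  induction M generalizing k N with
  | var n => rfl
  | lam M ih =>
    simp only [subst, ps, ih, lift_zero]
    congr 2
    funext n
    cases n with
    | zero => simp [ups, cons, sgl]
    | succ n =>
      simp only [ups, cons, sgl, Nat.add_right_cancel_iff, Nat.add_lt_add_iff_right]
      split_ifs <;> simp [ren] <;> omega
  | app P Q h1 h2 => simp [subst, ps, h1, h2]

theorem sgl_zero (N : Lam) : sgl 0 N = cons N .var := by
  funext n; cases n <;> simp [sgl, cons]

theorem ren_ren (f g : ℕ → ℕ) (M : Lam) : ren f (ren g M) = ren (f ∘ g) M := by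
  induction M generalizing f g with
  | var n => rfl
  | lam M ih =>
    simp only [ren, ih]; congr 2; funext n; cases n <;> rfl
  | app P Q h1 h2 => simp [ren, h1, h2]

theorem ps_ren (σ : ℕ → Lam) (g : ℕ → ℕ) (M : Lam) : ps σ (ren g M) = ps (σ ∘ g) M := by
  induction M generalizing σ g with
  | var n => rfl
  | lam M ih =>
    simp only [ren, ps, ih]; congr 2; funext n; cases n <;> rfl
  | app P Q h1 h2 => simp [ren, ps, h1, h2]

theorem ren_ps (f : ℕ → ℕ) (σ : ℕ → Lam) (M : Lam) :
    ren f (ps σ M) = ps (fun n => ren f (σ n)) M := by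
  induction M generalizing σ f with
  | var n => rfl
  | lam M ih =>
    simp only [ren, ps, ih]; congr 2; funext n
    cases n with
    | zero => rfl
    | succ n => simp only [ups, cons, ren_ren]; rfl
  | app P Q h1 h2 => simp [ren, ps, h1, h2]

theorem ps_ps (τ σ : ℕ → Lam) (M : Lam) : ps τ (ps σ M) = ps (fun n => ps τ (σ n)) M := by
  induction M generalizing σ τ with
  | var n => rfl
  | lam M ih =>
    simp only [ps, ih]; congr 2; funext n
    cases n with
    | zero => rfl
    | succ n => simp only [ups, cons, ps_ren, ren_ps]; rfl
  | app P Q h1 h2 => simp [ps, h1, h2]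

theorem ps_var (M : Lam) : ps .var M = M := by
  induction M with
  | var n => rfl
  | lam M ih =>
    have : ups .var = .var := by funext n; cases n <;> rfl
    simp only [ps, this, ih]
  | app P Q h1 h2 => simp [ps, h1, h2]

theorem subst_ups (σ : ℕ → Lam) (M N : Lam) : subst (ps (ups σ) M) 0 N = ps (cons N σ) M := by
  rw [subst_eq, sgl_zero, ps_ps]
  congr 1; funext n
  cases n with
  | zero => rfl
  | succ n =>
    simp only [ups, cons, ps_ren]
    exact ps_var _

theorem ps_subst (σ : ℕ → Lam) (M N : Lam) :
    ps σ (subst M 0 N) = subst (ps (ups σ) M) 0 (ps σ N) := by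
  rw [subst_ups, subst_eq, sgl_zero, ps_ps]
  congr 1; funext n
  cases n <;> rfl

/-! ### Typing and substitution (expansion) -/

theorem LT.ren_inv {M : Lam} {f : ℕ → ℕ} {ρ : Env} {d : Ty} (h : LT ρ (ren f M) d) :
    LT (fun n => ρ (f n)) M d := by
  induction M generalizing f ρ d with
  | var n => cases h with | var h => exact .var h
  | lam M ih =>
    cases h with
    | lam h =>
      refine .lam ((ih h).mono ?_)
      intro n; cases n <;> exact subset_rfl
  | app P Q h1 h2 =>
    cases h with
    | app h h' => exact .app (h1 h) (fun x hx => h2 (h' x hx))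

theorem LT.ps_inv {M : Lam} {σ : ℕ → Lam} {ρ : Env} {d : Ty} (h : LT ρ (ps σ M) d) :
    LT (fun n => {x | LT ρ (σ n) x}) M d := by
  induction M generalizing σ ρ d with
  | var n => exact .var h
  | lam M ih =>
    cases h with
    | lam h =>
      refine .lam ((ih h).mono ?_)
      intro n x hx
      cases n with
      | zero => cases hx with | var h => exact h
      | succ n => exact LT.ren_inv (f := Nat.succ) (ρ := cons _ ρ) hx
  | app P Q h1 h2 =>
    cases h with
    | app h h' => exact .app (h1 h) (fun x hx => h2 (h' x hx))

theorem LT.beta {M N : Lam} (h : Beta M N) {ρ : Env} {d : Ty} (hN : LT ρ N d) : LT ρ M d := by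
  induction h generalizing ρ d with
  | beta M N =>
    rw [subst_eq, sgl_zero] at hN
    obtain ⟨θ, h1, h2⟩ := hN.ps_inv.cont
    refine .app (e := θ 0) (.lam (h2.mono ?_)) (fun x hx => h1 0 hx)
    intro n x hx
    cases n with
    | zero => exact hx
    | succ n => cases h1 (n + 1) hx with | var h => exact h
  | lam _ ih => cases hN with | lam h => exact .lam (ih h)
  | appL _ ih => cases hN with | app h h' => exact .app (ih h) h'
  | appR _ ih => cases hN with | app h h' => exact .app h (fun x hx => ih (h' x hx))

def top : Env := fun _ => Set.univ

theorem LT.of_neutral {M : Lam} (h : neutral M = true) (d : Ty) : LT top M d := by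
  induction M generalizing d with
  | var n => exact .var trivial
  | lam M => simp [neutral] at h
  | app P Q h1 _ => exact .app (e := []) (h1 h _) (by simp)

theorem LT.of_hnf {M : Lam} (h : isHNF M) : ∃ d, LT top M d := by
  induction M with
  | var n => exact ⟨.o, .var trivial⟩
  | lam M ih =>
    obtain ⟨d, hd⟩ := ih h
    obtain ⟨θ, _, h2⟩ := hd.cont
    refine ⟨.arr (θ 0) d, .lam (h2.mono ?_)⟩
    intro n x hx
    cases n with
    | zero => exact hx
    | succ n => trivial
  | app P Q => exact ⟨.o, LT.of_neutral (M := .app P Q) h _⟩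

theorem LT.of_headNormalizable {M : Lam} (h : HeadNormalizable M) : ∃ d, LT top M d := by
  obtain ⟨N, h1, h2⟩ := h
  induction h1 using Relation.ReflTransGen.head_induction_on with
  | refl => exact LT.of_hnf h2
  | head h _ ih => obtain ⟨d, hd⟩ := ih; exact ⟨d, hd.beta h⟩

/-! ### Rigid expansion -/

theorem rigInd {P : Rig → Prop} (hv : ∀ n, P (.var n)) (hl : ∀ a, P a → P (.lam a))
    (ha : ∀ c ds, P c → (∀ d ∈ ds, P d) → P (.app c ds)) (a : Rig) : P a :=
  Rig.rec (motive_1 := P) (motive_2 := fun ds => ∀ d ∈ ds, P d) hv hl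
    (fun c ds h1 h2 => ha c ds h1 h2) (by simp)
    (fun a as h1 h2 d hd => by
      rcases List.mem_cons.1 hd with rfl | hd
      · exact h1
      · exact h2 d hd) a

theorem liftRList_eq (d : ℕ) (as : List Rig) : Rig.liftRList d as = as.map (Rig.liftR d) := by
  induction as with
  | nil => simp [Rig.liftRList]
  | cons a as ih => simp [Rig.liftRList, ih]

theorem RT.lift_inv {a : Rig} : ∀ {k : ℕ} {ρ ρ0 : Env} {d : Ty}, RT ρ (Rig.liftR k a) d →
    (∀ n, n < k → ρ n ⊆ ρ0 n) → (∀ n, k ≤ n → ρ (n + 1) ⊆ ρ0 n) → RT ρ0 a d := by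
  induction a using rigInd with
  | hv n =>
    intro k ρ ρ0 d h h1 h2
    rw [Rig.liftR] at h
    split_ifs at h with hn
    · cases h with | var h => exact .var (h1 _ hn h)
    · cases h with | var h => exact .var (h2 _ (by omega) h)
  | hl a ih =>
    intro k ρ ρ0 d h h1 h2
    rw [Rig.liftR] at h
    cases h with
    | lam h =>
      refine .lam (ih h ?_ ?_)
      · intro n hn
        cases n with
        | zero => exact subset_rfl
        | succ n => exact h1 n (by omega)
      · intro n hn
        cases n with
        | zero => omega
        | succ n => exact h2 n (by omega)
  | ha c ds hc hds =>
    intro k ρ ρ0 d h h1 h2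
    rw [Rig.liftR, liftRList_eq, RT_app_iff] at h
    obtain ⟨e, h3, h4⟩ := h
    refine (hc h3 h1 h2).app' (fun x hx => ?_)
    obtain ⟨b, hb, hbx⟩ := h4 x hx
    obtain ⟨b', hb', rfl⟩ := List.mem_map.1 hb
    exact ⟨b', hb', hds b' hb' hbx h1 h2⟩

theorem rsubst_var (k n : ℕ) (bs : List Rig) : Rig.rsubst k (.var n) bs =
    if n = k then (match bs with | [b] => some b | _ => none)
    else if bs = [] then (if k < n then some (.var (n - 1)) else some (.var n)) else none := by
  rcases bs with _ | ⟨b, _ | ⟨c, bs⟩⟩ <;> simp [Rig.rsubst] <;> split_ifs <;> rfl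

theorem rsubst_app {k : ℕ} {c : Rig} {ds bs : List Rig} {r : Rig}
    (h : Rig.rsubst k (.app c ds) bs = some r) :
    ∃ c' ds', Rig.rsubst k c (bs.take (Rig.countR k c)) = some c' ∧
      Rig.rsubstList k ds (bs.drop (Rig.countR k c)) = some ds' ∧ r = .app c' ds' := by
  rw [Rig.rsubst] at h
  split at h
  · next c' ds' h1 h2 => exact ⟨c', ds', h1, h2, by simpa using h.symm⟩
  · simp at h

theorem rsubstList_cons {k : ℕ} {c : Rig} {ds bs : List Rig} {r : List Rig}
    (h : Rig.rsubstList k (c :: ds) bs = some r) :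
    ∃ c' ds', Rig.rsubst k c (bs.take (Rig.countR k c)) = some c' ∧
      Rig.rsubstList k ds (bs.drop (Rig.countR k c)) = some ds' ∧ r = c' :: ds' := by
  rw [Rig.rsubstList] at h
  split at h
  · next c' ds' h1 h2 => exact ⟨c', ds', h1, h2, by simpa using h.symm⟩
  · simp at h

theorem rsubstList_mem {k : ℕ} {ds : List Rig} : ∀ {bs r : List Rig},
    Rig.rsubstList k ds bs = some r → ∀ x ∈ r, ∃ d ∈ ds, ∃ bs', (∀ b ∈ bs', b ∈ bs) ∧
      Rig.rsubst k d bs' = some x := by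
  induction ds with
  | nil =>
    intro bs r h
    rw [Rig.rsubstList] at h
    split_ifs at h
    simp at h
    subst h
    simp
  | cons d ds ih =>
    intro bs r h x hx
    obtain ⟨c', ds', h1, h2, rfl⟩ := rsubstList_cons h
    rcases List.mem_cons.1 hx with rfl | hx
    · exact ⟨d, by simp, _, fun b hb => List.mem_of_mem_take hb, h1⟩
    · obtain ⟨d', hd', bs', hb, h3⟩ := ih h2 x hx
      exact ⟨d', by simp [hd'], bs', fun b hbb => List.mem_of_mem_drop (hb b hbb), h3⟩

theorem RT.rsubst_inv {a : Rig} : ∀ {k : ℕ} {bs : List Rig} {a' : Rig} {ρ ρ0 : Env} {d : Ty},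
    RT ρ a' d → Rig.rsubst k a bs = some a' →
    (∀ n, n < k → ρ n ⊆ ρ0 n) → (∀ n, k ≤ n → ρ n ⊆ ρ0 (n + 1)) →
    (∀ b ∈ bs, ∀ x, RT ρ b x → x ∈ ρ0 k) → RT ρ0 a d := by
  induction a using rigInd with
  | hv n =>
    intro k bs a' ρ ρ0 d h hs h1 h2 h3
    rw [rsubst_var] at hs
    split_ifs at hs with hn hb hkn hb
    · subst hn
      split at hs
      · next b =>
        simp at hs; subst hs
        exact .var (h3 b (by simp) _ h)
      · simp at hs
    · simp at hs; subst hs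
      cases h with
      | var h =>
        have := h2 (n - 1) (by omega) h
        rw [Nat.sub_add_cancel (by omega)] at this
        exact .var this
    · simp at hs; subst hs
      cases h with
      | var h => exact .var (h1 n (by omega) h)
  | hl a ih =>
    intro k bs a' ρ ρ0 d h hs h1 h2 h3
    rw [Rig.rsubst, Option.map_eq_some_iff] at hs
    obtain ⟨a'', hs, rfl⟩ := hs
    cases h with
    | lam h =>
      refine .lam (ih h hs ?_ ?_ ?_)
      · intro n hn
        cases n with
        | zero => exact subset_rfl
        | succ n => exact h1 n (by omega)
      · intro n hn
        cases n with
        | zero => omega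
        | succ n => exact h2 n (by omega)
      · intro b hb x hx
        rw [liftRList_eq] at hb
        obtain ⟨b', hb', rfl⟩ := List.mem_map.1 hb
        exact h3 b' hb' x (hx.lift_inv (by omega) (fun n _ => subset_rfl))
  | ha c ds hc hds =>
    intro k bs a' ρ ρ0 d h hs h1 h2 h3
    obtain ⟨c', ds', hs1, hs2, rfl⟩ := rsubst_app hs
    obtain ⟨e, h4, h5⟩ := RT_app_iff.1 h
    refine (hc h4 hs1 h1 h2 (fun b hb => h3 b (List.mem_of_mem_take hb))).app' (fun x hx => ?_)
    obtain ⟨b, hb, hbx⟩ := h5 x hx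
    obtain ⟨d', hd', bs', hbs', hh⟩ := rsubstList_mem hs2 b hb
    exact ⟨d', hd', hds d' hd' hbx hh h1 h2
      (fun b hb => h3 b (List.mem_of_mem_drop (hbs' b hb)))⟩

theorem RT.step {a : Rig} {r : Option Rig} (h : Rig.RStep a r) : ∀ {a' : Rig} {ρ : Env} {d : Ty},
    r = some a' → RT ρ a' d → RT ρ a d := by
  induction h with
  | beta a bs =>
    intro a' ρ d hr h
    have := h.rsubst_inv (ρ0 := cons {x | ∃ b ∈ bs, RT ρ b x} ρ) hr (by omega)
      (fun n _ => subset_rfl) (fun b hb x hx => ⟨b, hb, hx⟩)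
    obtain ⟨θ, h1, h2⟩ := this.cont
    refine RT.app' (e := θ 0) (.lam (h2.mono ?_)) (fun x hx => h1 0 hx)
    intro n x hx
    cases n with
    | zero => exact hx
    | succ n => exact h1 (n + 1) hx
  | lam _ ih =>
    intro a' ρ d hr h
    obtain ⟨b, rfl, rfl⟩ := Option.map_eq_some_iff.1 hr
    cases h with | lam h => exact .lam (ih rfl h)
  | head ds _ ih =>
    intro a' ρ d hr h
    obtain ⟨b, rfl, rfl⟩ := Option.map_eq_some_iff.1 hr
    obtain ⟨e, h1, h2⟩ := RT_app_iff.1 h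
    exact (ih rfl h1).app' h2
  | arg c ds₁ ds₂ _ ih =>
    intro a' ρ d hr h
    obtain ⟨b, rfl, rfl⟩ := Option.map_eq_some_iff.1 hr
    obtain ⟨e, h1, h2⟩ := RT_app_iff.1 h
    refine h1.app' (fun x hx => ?_)
    obtain ⟨b', hb', hx'⟩ := h2 x hx
    simp only [List.mem_append, List.mem_cons] at hb'
    rcases hb' with hb | rfl | hb
    · exact ⟨b', by simp [hb], hx'⟩
    · exact ⟨_, by simp, ih rfl hx'⟩
    · exact ⟨b', by simp [hb], hx'⟩

theorem RT.of_neutral {M : Rig} (h : Rig.rNeutral M = true) : ∀ (d : Ty), RT top M d := by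
  induction M using rigInd with
  | hv n => exact fun d => .var trivial
  | hl M => simp [Rig.rNeutral] at h
  | ha P Q h1 _ => exact fun d => RT.app' (e := []) (h1 h _) (by simp)

theorem RT.of_hnf {M : Rig} (h : Rig.rIsHNF M) : ∃ d, RT top M d := by
  induction M using rigInd with
  | hv n => exact ⟨.o, .var trivial⟩
  | hl M ih =>
    obtain ⟨d, hd⟩ := ih h
    obtain ⟨θ, _, h2⟩ := hd.cont
    refine ⟨.arr (θ 0) d, .lam (h2.mono ?_)⟩
    intro n x hx
    cases n with
    | zero => exact hx
    | succ n => trivial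
  | ha P Q => exact ⟨.o, RT.of_neutral (M := .app P Q) h _⟩

theorem RT.steps {r s : Option Rig} (h : Relation.ReflTransGen Rig.RStepO r s) {b : Rig}
    (hs : s = some b) {d : Ty} (hb : RT top b d) : ∀ a, r = some a → RT top a d := by
  induction h using Relation.ReflTransGen.head_induction_on with
  | refl => intro a ha; rw [hs] at ha; cases ha; exact hb
  | @head r t h h' ih =>
    intro a ha
    cases h with
    | mk h =>
      cases ha
      cases t with
      | some a' => exact RT.step h rfl (ih a' rfl)
      | none =>
        exfalso
        rcases Relation.ReflTransGen.cases_head h' with h | ⟨_, h, _⟩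
        · rw [hs] at h; cases h
        · cases h

theorem LT.of_RT {ρ : Env} {a : Rig} {d : Ty} (h : RT ρ a d) : ∀ {M}, a ∈ Texp M → LT ρ M d := by
  induction h with
  | var h =>
    intro M hM
    cases M with
    | var m => simp [Texp] at hM; subst hM; exact .var h
    | lam M => simp [Texp] at hM
    | app P Q => simp [Texp] at hM
  | lam _ ih =>
    intro M hM
    cases M with
    | var m => simp [Texp] at hM
    | lam M => simp [Texp] at hM; exact .lam (ih hM)
    | app P Q => simp [Texp] at hM
  | app f _ h1 _ ih1 ih2 =>
    intro M hM
    cases M with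
    | var m => simp [Texp] at hM
    | lam M => simp [Texp] at hM
    | app P Q =>
      simp [Texp] at hM
      exact .app (ih1 hM.1) (fun x hx => ih2 x hx (hM.2 _ (h1 x hx)))

/-! ### Head normalization by reducibility -/

def HNz (M : Lam) : Prop := ∃ m : ℕ, isHNF (H^[m] M)

inductive WH : Lam → Lam → Prop
  | beta (P Q : Lam) : WH (.app (.lam P) Q) (subst P 0 Q)
  | app {P P'} (Q : Lam) : WH P P' → WH (.app P Q) (.app P' Q)

theorem WH.H_eq {M M' : Lam} (h : WH M M') : H M = M' := by
  induction h with
  | beta P Q => simp [H]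
  | app Q h ih => cases h <;> simp_all [H]

theorem HNz.of_H {M : Lam} (h : HNz (H M)) : HNz M := by
  obtain ⟨m, hm⟩ := h
  exact ⟨m + 1, hm⟩

theorem hnf_of_neutral {M : Lam} (h : neutral M = true) : isHNF M := by
  cases M <;> simp_all [neutral, isHNF]

theorem HNz.of_hnf {M : Lam} (h : isHNF M) : HNz M := ⟨0, h⟩

theorem H_iter_lam (m : ℕ) (M : Lam) : H^[m] (.lam M) = .lam (H^[m] M) := by
  induction m generalizing M with
  | zero => rfl
  | succ m ih => simp only [Function.iterate_succ_apply, H, ih]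

theorem HNz.lam {M : Lam} (h : HNz M) : HNz (.lam M) := by
  obtain ⟨m, hm⟩ := h
  exact ⟨m, by rw [H_iter_lam]; exact hm⟩

theorem H_app_of_not {P : Lam} (Q : Lam) (h1 : neutral P ≠ true) (h2 : ∀ P', P ≠ .lam P') :
    H (.app P Q) = .app (H P) Q := by
  cases P with
  | var n => simp [neutral] at h1
  | lam P => exact absurd rfl (h2 P)
  | app A B => simp [H]

theorem neutral_H {P : Lam} (h : neutral P = true) : H P = P := by
  induction P with
  | var n => rfl
  | lam P => simp [neutral] at h
  | app A B ih =>
    cases A with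
    | var n => rfl
    | lam A => simp [neutral] at h
    | app C D => simp only [H]; rw [ih h]

theorem H_ps {M : Lam} (σ : ℕ → Lam) (h : ¬ isHNF M) : H (ps σ M) = ps σ (H M) := by
  induction M generalizing σ with
  | var n => simp [isHNF] at h
  | lam M ih => simp only [ps, H]; rw [ih _ h]
  | app P Q ih =>
    cases P with
    | var n => simp [isHNF, neutral] at h
    | lam P => simp only [ps, H]; rw [ps_subst]
    | app A B =>
      have := ih σ h
      simp only [ps] at this
      simp only [ps, H, this]

theorem HNz.of_ps {M : Lam} {σ : ℕ → Lam} (h : HNz (ps σ M)) : HNz M := by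
  obtain ⟨m, hm⟩ := h
  induction m generalizing M with
  | zero =>
    by_cases hM : isHNF M
    · exact .of_hnf hM
    · exfalso
      change isHNF (ps σ M) at hm
      clear * - hM hm
      induction M generalizing σ with
      | var n => exact hM trivial
      | lam M ih => exact ih hM hm
      | app P Q ih =>
        simp only [isHNF, ps] at hM hm
        clear ih
        induction P with
        | var n => exact hM rfl
        | lam M ih => simp [ps, neutral] at hm
        | app P Q ih => exact ih hM hm
  | succ m ih =>
    by_cases hM : isHNF M
    · exact .of_hnf hM
    · apply HNz.of_H
      apply ih
      rw [← H_ps _ hM]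
      exact hm

theorem HNz.of_app {M N : Lam} (h : HNz (.app M N)) : HNz M := by
  obtain ⟨m, hm⟩ := h
  induction m generalizing M with
  | zero => exact .of_hnf (hnf_of_neutral hm)
  | succ m ih =>
    by_cases h1 : neutral M = true
    · exact .of_hnf (hnf_of_neutral h1)
    · by_cases h2 : ∀ P', M ≠ .lam P'
      · rw [Function.iterate_succ_apply, H_app_of_not _ h1 h2] at hm
        exact (ih hm).of_H
      · push Not at h2
        obtain ⟨P, rfl⟩ := h2
        apply HNz.lam
        have : HNz (subst P 0 N) := ⟨m, by simpa [H] using hm⟩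
        rw [subst_eq] at this
        exact this.of_ps

mutual
def Red : Ty → Lam → Prop
  | .o, M => HNz M
  | .arr e d, M => ∀ N, RedAll e N → Red d (.app M N)

def RedAll : List Ty → Lam → Prop
  | [], _ => True
  | t :: ts, M => Red t M ∧ RedAll ts M
end

theorem RedAll_iff (e : List Ty) (M : Lam) : RedAll e M ↔ ∀ x ∈ e, Red x M := by
  induction e with
  | nil => simp [RedAll]
  | cons a e ih => simp [RedAll, ih]

theorem tyInd {P : Ty → Prop} (ho : P .o)
    (ha : ∀ e d, (∀ x ∈ e, P x) → P d → P (.arr e d)) (a : Ty) : P a :=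
  Ty.rec (motive_1 := P) (motive_2 := fun ds => ∀ d ∈ ds, P d) ho
    (fun c ds h1 h2 => ha c ds h1 h2) (by simp)
    (fun a as h1 h2 d hd => by
      rcases List.mem_cons.1 hd with rfl | hd
      · exact h1
      · exact h2 d hd) a

theorem Red_props (t : Ty) :
    (∀ M, neutral M = true → Red t M) ∧ (∀ M, Red t M → HNz M) ∧
    (∀ M M', WH M M' → Red t M' → Red t M) := by
  induction t using tyInd with
  | ho =>
    simp only [Red]
    refine ⟨fun M h => .of_hnf (hnf_of_neutral h), fun M h => h, fun M M' h h' => ?_⟩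
    rw [← h.H_eq] at h'
    exact h'.of_H
  | ha e d he hd =>
    simp only [Red, RedAll_iff]
    refine ⟨fun M h N _ => hd.1 _ h, fun M h => ?_, fun M M' h h' N hN => ?_⟩
    · exact (hd.2.1 _ (h (.var 0) (fun x hx => (he x hx).1 _ rfl))).of_app
    · exact hd.2.2 _ _ (.app N h) (h' N hN)

theorem LT.adequate {ρ : Env} {M : Lam} {d : Ty} (h : LT ρ M d) :
    ∀ σ : ℕ → Lam, (∀ n, ∀ t ∈ ρ n, Red t (σ n)) → Red d (ps σ M) := by
  induction h with
  | var h => exact fun σ hσ => hσ _ _ h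
  | lam _ ih =>
    intro σ hσ
    simp only [Red, RedAll_iff, ps]
    intro N hN
    refine (Red_props _).2.2 _ _ (.beta _ _) ?_
    rw [subst_ups]
    apply ih
    intro n t ht
    cases n with
    | zero => exact hN t ht
    | succ n => exact hσ n t ht
  | app _ _ ih1 ih2 =>
    intro σ hσ
    have := ih1 σ hσ
    simp only [Red, RedAll_iff] at this
    exact this _ (fun x hx => ih2 x hx σ hσ)

theorem LT.hnz {ρ : Env} {M : Lam} {d : Ty} (h : LT ρ M d) : HNz M := by
  have := h.adequate .var (fun n t _ => (Red_props t).1 _ rfl)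
  rw [ps_var] at this
  exact (Red_props d).2.1 _ this

theorem H_beta (M : Lam) : Relation.ReflTransGen Beta M (H M) := by
  induction M with
  | var n => exact .refl
  | lam M ih => exact ih.lift Lam.lam (fun _ _ h => Beta.lam h)
  | app P Q ih =>
    cases P with
    | var n => exact .refl
    | lam P => exact .single (.beta _ _)
    | app A B => exact ih.lift (fun x => Lam.app x Q) (fun _ _ h => Beta.appL h)

theorem HNz.headNormalizable {M : Lam} (h : HNz M) : HeadNormalizable M := by
  obtain ⟨m, hm⟩ := h
  refine ⟨_, ?_, hm⟩
  clear hm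
  induction m generalizing M with
  | zero => exact .refl
  | succ m ih => exact (H_beta M).trans ih

/-! ### Pulling back along head reduction -/

theorem Texp_lift {N : Lam} : ∀ {d : ℕ} {b : Rig}, b ∈ Texp (lift d N) →
    ∃ a ∈ Texp N, Rig.liftR d a = b := by
  induction N with
  | var n =>
    intro d b h
    refine ⟨.var n, rfl, ?_⟩
    simp only [lift] at h
    rw [Rig.liftR]
    split_ifs at h ⊢ <;> exact h.symm
  | lam N ih =>
    intro d b h
    obtain ⟨b', hb', rfl⟩ := h
    obtain ⟨a, ha, rfl⟩ := ih hb'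
    exact ⟨.lam a, ⟨a, ha, rfl⟩, by rw [Rig.liftR]⟩
  | app P Q h1 h2 =>
    intro d b h
    obtain ⟨c, hc, ds, hds, rfl⟩ := h
    obtain ⟨a, ha, rfl⟩ := h1 hc
    have : ∃ es : List Rig, (∀ e ∈ es, e ∈ Texp Q) ∧ es.map (Rig.liftR d) = ds := by
      clear hc
      induction ds with
      | nil => exact ⟨[], by simp, rfl⟩
      | cons x xs ih =>
        obtain ⟨es, h3, h4⟩ := ih (fun d hd => hds d (by simp [hd]))
        obtain ⟨y, hy, rfl⟩ := h2 (hds x (by simp))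
        exact ⟨y :: es, by simpa [hy] using h3, by simp [h4]⟩
    obtain ⟨es, h3, rfl⟩ := this
    exact ⟨.app a es, ⟨a, ha, es, h3, rfl⟩, by rw [Rig.liftR, liftRList_eq]⟩

theorem Texp_lift_list {N : Lam} {d : ℕ} {bs : List Rig} (h : ∀ b ∈ bs, b ∈ Texp (lift d N)) :
    ∃ as : List Rig, (∀ a ∈ as, a ∈ Texp N) ∧ Rig.liftRList d as = bs := by
  simp only [liftRList_eq]
  induction bs with
  | nil => exact ⟨[], by simp, rfl⟩
  | cons x xs ih =>
    obtain ⟨es, h3, h4⟩ := ih (fun d hd => h d (by simp [hd]))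
    obtain ⟨y, hy, rfl⟩ := Texp_lift (h x (by simp))
    exact ⟨y :: es, by simpa [hy] using h3, by simp [h4]⟩

theorem Texp_subst {M : Lam} : ∀ {k : ℕ} {N : Lam} {b : Rig}, b ∈ Texp (subst M k N) →
    ∃ a ∈ Texp M, ∃ bs : List Rig, (∀ x ∈ bs, x ∈ Texp N) ∧ bs.length = Rig.countR k a ∧
      Rig.rsubst k a bs = some b := by
  induction M with
  | var n =>
    intro k N b h
    refine ⟨.var n, rfl, ?_⟩
    simp only [subst] at h
    simp only [Rig.countR, rsubst_var]
    split_ifs at h ⊢ with h1 h2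
    · exact ⟨[b], by simpa using h, rfl, rfl⟩
    · exact ⟨[], by simp, rfl, by simpa using h.symm⟩
    · exact ⟨[], by simp, rfl, by simpa using h.symm⟩
  | lam M ih =>
    intro k N b h
    obtain ⟨b', hb', rfl⟩ := h
    obtain ⟨a, ha, bs, h1, h2, h3⟩ := ih hb'
    obtain ⟨as, h4, rfl⟩ := Texp_lift_list h1
    refine ⟨.lam a, ⟨a, ha, rfl⟩, as, h4, ?_, ?_⟩
    · rw [Rig.countR, ← h2, liftRList_eq, List.length_map]
    · rw [Rig.rsubst, h3]; rfl
  | app P Q hP hQ =>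
    intro k N b h
    obtain ⟨c, hc, ds, hds, rfl⟩ := h
    obtain ⟨a, ha, bs, h1, h2, h3⟩ := hP hc
    have : ∃ es : List Rig, (∀ e ∈ es, e ∈ Texp Q) ∧ ∃ cs : List Rig, (∀ x ∈ cs, x ∈ Texp N) ∧
        cs.length = Rig.countRList k es ∧ Rig.rsubstList k es cs = some ds := by
      clear hc h3
      induction ds with
      | nil => exact ⟨[], by simp, [], by simp, by simp [Rig.countRList], by simp [Rig.rsubstList]⟩
      | cons x xs ih =>
        obtain ⟨es, h3, cs, h4, h5, h6⟩ := ih (fun d hd => hds d (by simp [hd]))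
        obtain ⟨y, hy, us, h7, h8, h9⟩ := hQ (hds x (by simp))
        refine ⟨y :: es, by simpa [hy] using h3, us ++ cs, ?_, ?_, ?_⟩
        · intro x hx
          rcases List.mem_append.1 hx with hx | hx
          · exact h7 x hx
          · exact h4 x hx
        · simp [Rig.countRList, h5, h8]
        · rw [Rig.rsubstList, ← h8, List.take_left, List.drop_left, h9, h6]
    obtain ⟨es, h4, cs, h5, h6, h7⟩ := this
    refine ⟨.app a es, ⟨a, ha, es, h4, rfl⟩, bs ++ cs, ?_, ?_, ?_⟩
    · intro x hx
      rcases List.mem_append.1 hx with hx | hx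
      · exact h1 x hx
      · exact h5 x hx
    · simp [Rig.countR, h2, h6]
    · rw [Rig.rsubst, ← h2, List.take_left, List.drop_left, h3, h7]

theorem Texp_H {M : Lam} : ∀ {b : Rig}, b ∈ Texp (H M) → ∃ a ∈ Texp M, Rig.Hr a = some b := by
  induction M with
  | var n => intro b h; exact ⟨b, h, by cases h; rfl⟩
  | lam M ih =>
    intro b h
    obtain ⟨b', hb', rfl⟩ := h
    obtain ⟨a, ha, h⟩ := ih hb'
    exact ⟨.lam a, ⟨a, ha, rfl⟩, by simp [Rig.Hr, h]⟩
  | app P Q ih =>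
    intro b h
    cases P with
    | var n =>
      refine ⟨b, h, ?_⟩
      obtain ⟨c, hc, ds, hds, rfl⟩ := h
      cases hc
      simp [Rig.Hr]
    | lam P =>
      simp only [H] at h
      obtain ⟨a, ha, bs, h1, h2, h3⟩ := Texp_subst h
      exact ⟨.app (.lam a) bs, ⟨.lam a, ⟨a, ha, rfl⟩, bs, h1, rfl⟩, by simp [Rig.Hr, h3]⟩
    | app A B =>
      simp only [H] at h
      obtain ⟨c, hc, ds, hds, rfl⟩ := h
      obtain ⟨a, ha, h⟩ := ih hc
      refine ⟨.app a ds, ⟨a, ha, ds, hds, rfl⟩, ?_⟩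
      obtain ⟨c', hc', ds', hds', rfl⟩ := ha
      simp [Rig.Hr, h]

theorem Texp_H_iter {m : ℕ} : ∀ {M : Lam} {b : Rig}, b ∈ Texp (H^[m] M) →
    ∃ a ∈ Texp M, Rig.HrO^[m] (some a) = some b := by
  induction m with
  | zero => intro M b h; exact ⟨b, h, rfl⟩
  | succ m ih =>
    intro M b h
    obtain ⟨a, ha, h1⟩ := ih (M := H M) h
    obtain ⟨a', ha', h2⟩ := Texp_H ha
    refine ⟨a', ha', ?_⟩
    rw [Function.iterate_succ_apply]
    simp only [Rig.HrO, Option.bind_some, h2]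
    exact h1

/-- Lifting of nonzero reductions through a context. -/
theorem steps_map (f : Rig → Rig)
    (hf : ∀ a r, Rig.RStep a r → Rig.RStep (f a) (r.map f)) {r s : Option Rig}
    (h : Relation.ReflTransGen Rig.RStepO r s) :
    Relation.ReflTransGen Rig.RStepO (r.map f) (s.map f) :=
  h.lift (Option.map f) (fun _ _ h => by cases h with | mk h => exact .mk (hf _ _ h))

theorem Hr_steps (a : Rig) : Relation.ReflTransGen Rig.RStepO (some a) (Rig.Hr a) := by
  induction a using rigInd with
  | hv n => simp only [Rig.Hr]; exact .refl
  | hl a ih =>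
    simp only [Rig.Hr]
    exact steps_map Rig.lam (fun _ _ h => .lam h) ih
  | ha c ds ih =>
    cases c with
    | var n => simp only [Rig.Hr]; exact .refl
    | lam a => simp only [Rig.Hr]; exact .single (.mk (.beta _ _))
    | app c' ds' =>
      simp only [Rig.Hr]
      exact steps_map (fun x => Rig.app x ds) (fun _ _ h => .head ds h) ih

theorem HrO_steps (r : Option Rig) : Relation.ReflTransGen Rig.RStepO r (Rig.HrO r) := by
  cases r with
  | none => exact .refl
  | some a => exact Hr_steps a

theorem HrO_iter_steps (m : ℕ) : ∀ r : Option Rig,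
    Relation.ReflTransGen Rig.RStepO r (Rig.HrO^[m] r) := by
  induction m with
  | zero => exact fun r => .refl
  | succ m ih => exact fun r => (HrO_steps r).trans (ih _)

theorem exists_neutral {M : Lam} (h : neutral M = true) :
    ∃ b ∈ Texp M, Rig.rNeutral b = true ∧ ∀ r, ¬ Rig.RStep b r := by
  induction M with
  | var n => exact ⟨.var n, rfl, rfl, fun r h => by cases h⟩
  | lam M => simp [neutral] at h
  | app P Q ih =>
    obtain ⟨b, hb, h1, h2⟩ := ih h
    refine ⟨.app b [], ⟨b, hb, [], by simp, rfl⟩, h1, ?_⟩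
    intro r hr
    generalize hx : Rig.app b [] = x at hr
    cases hr with
    | beta a bs => cases hx; simp [Rig.rNeutral] at h1
    | lam h => cases hx
    | head ds h => cases hx; exact h2 _ h
    | arg c ds1 ds2 h => simp at hx

theorem exists_hnf {M : Lam} (h : isHNF M) :
    ∃ b ∈ Texp M, Rig.rIsHNF b ∧ ∀ r, ¬ Rig.RStep b r := by
  induction M with
  | var n => exact ⟨.var n, rfl, trivial, fun r h => by cases h⟩
  | lam M ih =>
    obtain ⟨b, hb, h1, h2⟩ := ih h
    refine ⟨.lam b, ⟨b, hb, rfl⟩, h1, fun r hr => ?_⟩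
    cases hr with
    | lam h => exact h2 _ h
  | app P Q =>
    obtain ⟨b, hb, h1, h2⟩ := exists_neutral (M := .app P Q) h
    refine ⟨b, hb, ?_, h2⟩
    obtain ⟨c, hc, ds, hds, rfl⟩ := hb
    exact h1

theorem hnf_of_normal {b : Rig} (h : ∀ r, ¬ Rig.RStep b r) : Rig.rIsHNF b := by
  induction b using rigInd with
  | hv n => trivial
  | hl a ih => exact ih (fun r hr => h _ (.lam hr))
  | ha c ds ih =>
    have := ih (fun r hr => h _ (.head ds hr))
    cases c with
    | var n => rfl
    | lam a => exact absurd (.beta a ds) (h _)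
    | app c' ds' => exact this

end HN

/-- the four characterizations of head normalization are equivalent. -/
theorem head_normalization_TFAE (M : Lam) :
    [(∃ a ∈ Texp M, ∃ b : Rig,
        Relation.ReflTransGen Rig.RStepO (some a) (some b) ∧ Rig.RNormal (some b)),
     (∃ a ∈ Texp M, ∃ m : ℕ, ∃ b : Rig,
        Rig.HrO^[m] (some a) = some b ∧ Rig.rIsHNF b),
     (∃ m : ℕ, Lam.isHNF (Lam.H^[m] M)),
     Lam.HeadNormalizable M].TFAE := by
  have key : ∀ a ∈ Texp M, ∀ b : Rig, Relation.ReflTransGen Rig.RStepO (some a) (some b) →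
      Rig.rIsHNF b → HN.HNz M := by
    intro a ha b h hb
    obtain ⟨d, hd⟩ := HN.RT.of_hnf hb
    exact (HN.LT.of_RT (HN.RT.steps h rfl hd a rfl) ha).hnz
  tfae_have 1 → 3 := by
    rintro ⟨a, ha, b, h, hb⟩
    exact key a ha b h (HN.hnf_of_normal (fun r hr => hb ⟨r, .mk hr⟩))
  tfae_have 2 → 3 := by
    rintro ⟨a, ha, m, b, h, hb⟩
    exact key a ha b (h ▸ HN.HrO_iter_steps m (some a)) hb
  tfae_have 3 → 1 := by
    rintro ⟨m, hm⟩
    obtain ⟨b, hb, h1, h2⟩ := HN.exists_hnf hm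
    obtain ⟨a, ha, h⟩ := HN.Texp_H_iter hb
    refine ⟨a, ha, b, h ▸ HN.HrO_iter_steps m (some a), ?_⟩
    rintro ⟨r, hr⟩
    cases hr with
    | mk hr => exact h2 _ hr
  tfae_have 3 → 2 := by
    rintro ⟨m, hm⟩
    obtain ⟨b, hb, h1, h2⟩ := HN.exists_hnf hm
    obtain ⟨a, ha, h⟩ := HN.Texp_H_iter hb
    exact ⟨a, ha, m, b, h, h1⟩
  tfae_have 3 → 4 := fun h => HN.HNz.headNormalizable h
  tfae_have 4 → 3 := by
    intro h
    obtain ⟨d, hd⟩ := HN.LT.of_headNormalizable h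
    exact hd.hnz
  tfae_finish
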